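/- Let Ω ⊂ ℝ² be given by Ω = { (x,y) : −1 ≤ x ≤ 1, f(x) ≤ y ≤ 1/3 }, where f : [−2,2] → ℝ is continuous and convex with f(0) = 0, f'_+(0) = 0, 0 ≤ f(x) ≤ 1/5 and |f'_±(x)| ≤ 1/3 for x ∈ [−1,1]. Define ρ̃((x₁,y₁),(x₂,y₂)) := ‖(x₁−x₂, y₁−y₂)‖ + sup_L |√(y₁−L(x₁)) − √(y₂−L(x₂))|, where the supremum is over linear functions L(x) = f(x₀) + a(x−x₀) with x₀ ∈ [−1,1] and a ∈ {f'_+(x₀), f'_−(x₀)}. Then there is an absolute constant C > 1 such that for every n, every polynomial Q ∈ Π_n² and every C₁²/n² ≤ δ ≤ 1/100 (with C₁ a suitable absolute constant) and (a,b) ∈ Ω, |Q(0,δ) − Q(a,b)| ≤ C·n·ρ̃((0,δ),(a,b))·max_{z∈Ω}|Q(z)|. -/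

import Mathlib

/-- The planar metric `ρ̃` built from supporting lines of the graph of `f`. -/
noncomputable def rhoTilde (f : ℝ → ℝ) (p q : ℝ × ℝ) : ℝ :=
  Real.sqrt ((p.1 - q.1) ^ 2 + (p.2 - q.2) ^ 2) +
    sSup {r : ℝ | ∃ x₀ ∈ Set.Icc (-1 : ℝ) 1, ∃ a : ℝ,
      (a = derivWithin f (Set.Ici x₀) x₀ ∨ a = derivWithin f (Set.Iic x₀) x₀) ∧
      r = |Real.sqrt (p.2 - (f x₀ + a * (p.1 - x₀))) -
            Real.sqrt (q.2 - (f x₀ + a * (q.1 - x₀)))|}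

/-!
If `q` is a real polynomial of degree `m`, then `q ∘ cos` has exponential type `m`, so
`q(cosh z) e^{-mz}` obeys a maximum principle in the half-plane `Re z ≥ 0` and Cauchy's estimate
bounds `(q ∘ cos)'` by a multiple of `m` times the maximum of `|q|` on `[-1, 1]`. Hence a polynomial
of total degree at most `n`, restricted to a quadratic curve lying in the region, is Lipschitz with
constant `O(n)` on the middle half of the parameter interval.

Write `ρ = ρ̃((0, δ), (a, b))`. If `ρ > √δ / 10`, then `n ρ` is bounded below and the estimate is
trivial. Otherwise a supporting line of slope `s`, with `(0, δ)` at height `u` above it, satisfies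
`|s a| ≤ 5 ρ √u`; completing the square puts the parabola `t ↦ (a t, δ + (5 ρ t / 2) ^ 2)` above
the graph of `f`, for `t` up to order `1 / ρ` and not just up to `1`. One travels from `(0, δ)`
along this parabola to the abscissa `a`, a parameter length of order `ρ`, and then to `(a, b)` along
the vertical segment, parametrized quadratically from its lower endpoint.
-/

open Set Filter Topology

lemma norm_cosh_le_exp_re {z : ℂ} (hz : 0 ≤ z.re) : ‖Complex.cosh z‖ ≤ Real.exp z.re := by
  have hneg : Real.exp (-z.re) ≤ Real.exp z.re := Real.exp_le_exp.2 (by linarith)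
  have hadd : ‖Complex.exp z + Complex.exp (-z)‖ ≤ Real.exp z.re + Real.exp (-z.re) := by
    simpa only [Complex.norm_exp, Complex.neg_re] using
      norm_add_le (Complex.exp z) (Complex.exp (-z))
  rw [Complex.cosh, norm_div, Complex.norm_ofNat, div_le_iff₀ two_pos]
  linarith

lemma norm_eval_le_sum_norm_coeff_mul_pow {R : Type*} [NormedRing R] [NormMulClass R]
    [NormOneClass R] (q : Polynomial R) {w : R} {r : ℝ} (hr : 1 ≤ r) (hw : ‖w‖ ≤ r) :
    ‖q.eval w‖ ≤ (∑ k ∈ Finset.range (q.natDegree + 1), ‖q.coeff k‖) * r ^ q.natDegree := by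
  rw [Polynomial.eval_eq_sum_range, Finset.sum_mul]
  refine norm_sum_le_of_le _ fun k hk ↦ ?_
  rw [norm_mul, norm_pow]
  have hkN : k ≤ q.natDegree := Finset.mem_range_succ_iff.1 hk
  gcongr
  calc ‖w‖ ^ k ≤ r ^ k := by gcongr
    _ ≤ r ^ q.natDegree := pow_le_pow_right₀ hr hkN

lemma norm_eval_cosh_le (q : Polynomial ℂ) {M : ℝ} (hM : ∀ x ∈ Icc (-1 : ℝ) 1, ‖q.eval (x : ℂ)‖ ≤ M)
    {z : ℂ} (hz : 0 ≤ z.re) : ‖q.eval (Complex.cosh z)‖ ≤ M * Real.exp (q.natDegree * z.re) := by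
  set N := q.natDegree with hN
  set F : ℂ → ℂ := fun z ↦ q.eval (Complex.cosh z) * Complex.exp (-(N * z)) with hF
  have norm_F (z : ℂ) :
      ‖F z‖ = ‖q.eval (Complex.cosh z)‖ * Real.exp (-(N * z.re)) := by
    simp [hF, Complex.norm_exp]
  have F_le (z : ℂ) (hz : 0 ≤ z.re) : ‖F z‖ ≤ ∑ k ∈ Finset.range (N + 1), ‖q.coeff k‖ := by
    have hexp := norm_eval_le_sum_norm_coeff_mul_pow q (Real.one_le_exp hz) (norm_cosh_le_exp_re hz)
    rwa [← Real.exp_nat_mul, ← hN, ← div_le_iff₀ (Real.exp_pos _), div_eq_mul_inv, ← Real.exp_neg,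
      ← norm_F] at hexp
  have hFM : ‖F z‖ ≤ M := by
    refine PhragmenLindelof.right_half_plane_of_bounded_on_real ?_ ?_ ?_ ?_ hz
    · have : Differentiable ℂ F := by fun_prop
      exact this.diffContOnCl
    · refine ⟨0, two_pos, 0,
        Asymptotics.IsBigO.of_bound (∑ k ∈ Finset.range (N + 1), ‖q.coeff k‖) ?_⟩
      filter_upwards [mem_inf_of_right (mem_principal_self _)] with w hw
      simpa only [zero_mul, Real.exp_zero, norm_one, mul_one] using F_le w (le_of_lt hw)
    · refine isBoundedUnder_of_eventually_le ((eventually_ge_atTop 0).mono fun x hx ↦ F_le x ?_)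
      exact_mod_cast hx
    · intro x
      rw [norm_F, Complex.cosh_mul_I, ← Complex.ofReal_cos]
      simpa using hM _ (Real.cos_mem_Icc x)
  rwa [norm_F, Real.exp_neg, ← div_eq_mul_inv, div_le_iff₀ (Real.exp_pos _)] at hFM

lemma norm_eval_cos_le (q : Polynomial ℂ) {M : ℝ} (hM : ∀ x ∈ Icc (-1 : ℝ) 1, ‖q.eval (x : ℂ)‖ ≤ M)
    (z : ℂ) : ‖q.eval (Complex.cos z)‖ ≤ M * Real.exp (q.natDegree * |z.im|) := by
  rcases le_total z.im 0 with hz | hz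
  · rw [abs_of_nonpos hz, ← Complex.cosh_mul_I]
    simpa using norm_eval_cosh_le q hM (z := z * Complex.I) (by simpa using hz)
  · rw [abs_of_nonneg hz, ← Complex.cos_neg, ← Complex.cosh_mul_I]
    simpa using norm_eval_cosh_le q hM (z := -z * Complex.I) (by simpa using hz)

lemma norm_deriv_le_of_norm_le_mul_exp_abs_im {E : Type*} [NormedAddCommGroup E] [NormedSpace ℂ E]
    {F : ℂ → E} (hF : Differentiable ℂ F) {M σ : ℝ} (hM : 0 ≤ M) (hσ : 0 < σ)
    (hbound : ∀ z, ‖F z‖ ≤ M * Real.exp (σ * |z.im|)) (x : ℝ) : ‖deriv F x‖ ≤ 3 * σ * M := by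
  have hcircle : ∀ z ∈ Metric.sphere (x : ℂ) σ⁻¹, ‖F z‖ ≤ 3 * M := by
    intro z hz
    have him : σ * |z.im| ≤ 1 := by
      have := Complex.abs_im_le_norm (z - x)
      rw [mem_sphere_iff_norm.1 hz, Complex.sub_im, Complex.ofReal_im, sub_zero] at this
      rwa [← le_inv_mul_iff₀ hσ, mul_one]
    calc ‖F z‖ ≤ M * Real.exp (σ * |z.im|) := hbound z
      _ ≤ M * Real.exp 1 := by gcongr
      _ ≤ 3 * M := by rw [mul_comm]; gcongr; exact Real.exp_one_lt_three.le
  calc ‖deriv F x‖ ≤ 3 * M / σ⁻¹ :=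
        Complex.norm_deriv_le_of_forall_mem_sphere_norm_le (inv_pos.2 hσ) hF.diffContOnCl hcircle
    _ = 3 * σ * M := by rw [div_inv_eq_mul]; ring

lemma abs_eval_cos_sub_eval_cos_le (q : Polynomial ℝ) {M : ℝ}
    (hM : ∀ x ∈ Icc (-1 : ℝ) 1, |q.eval x| ≤ M) (θ φ : ℝ) :
    |q.eval (Real.cos θ) - q.eval (Real.cos φ)| ≤ 3 * q.natDegree * M * |θ - φ| := by
  have hM0 : 0 ≤ M := (abs_nonneg _).trans (hM 0 (by norm_num))
  rcases q.natDegree.eq_zero_or_pos with hdeg | hdeg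
  · rw [Polynomial.eq_C_of_natDegree_eq_zero hdeg]
    simp
  set qc := q.map Complex.ofRealHom
  have eval_ofReal (x : ℝ) : qc.eval (x : ℂ) = (q.eval x : ℝ) :=
    Polynomial.eval_map_apply Complex.ofRealHom x
  have hqc_deg : qc.natDegree = q.natDegree := Polynomial.natDegree_map _
  have hqc_bound : ∀ z, ‖qc.eval (Complex.cos z)‖ ≤ M * Real.exp (q.natDegree * |z.im|) := by
    rw [← hqc_deg]
    refine norm_eval_cos_le qc fun x hx ↦ ?_
    simpa only [eval_ofReal, Complex.norm_real, Real.norm_eq_abs] using hM x hx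
  have hdiff : Differentiable ℂ fun z ↦ qc.eval (Complex.cos z) := by fun_prop
  have hderiv (x : ℝ) : HasDerivAt (fun t : ℝ ↦ q.eval (Real.cos t))
      (deriv (fun z ↦ qc.eval (Complex.cos z)) x).re x := by
    simpa only [← Complex.ofReal_cos, eval_ofReal, Complex.ofReal_re]
      using (hdiff x).hasDerivAt.real_of_complex
  refine Convex.norm_image_sub_le_of_norm_hasDerivWithin_le
    (fun x _ ↦ (hderiv x).hasDerivWithinAt) (fun x _ ↦ ?_) convex_univ (mem_univ φ) (mem_univ θ)
  exact (Complex.abs_re_le_norm _).trans <|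
    norm_deriv_le_of_norm_le_mul_exp_abs_im hdiff hM0 (Nat.cast_pos.2 hdeg) hqc_bound x

lemma abs_arccos_sub_arccos_le {s t : ℝ} (hs : s ∈ Icc (-1 / 2 : ℝ) (1 / 2))
    (ht : t ∈ Icc (-1 / 2 : ℝ) (1 / 2)) : |Real.arccos s - Real.arccos t| ≤ 2 * |s - t| := by
  refine Convex.norm_image_sub_le_of_norm_hasDerivWithin_le (𝕜 := ℝ) (fun x hx ↦
    (Real.hasDerivAt_arccos (by linarith [hx.1]) (by linarith [hx.2])).hasDerivWithinAt)
    (fun x hx ↦ ?_) (convex_Icc _ _) ht hs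
  have hsqrt : (1 / 2 : ℝ) ≤ √(1 - x ^ 2) := Real.le_sqrt_of_sq_le (by nlinarith [hx.1, hx.2])
  rw [norm_neg, Real.norm_of_nonneg (by positivity), div_le_iff₀ (by linarith)]
  linarith

lemma abs_eval_sub_eval_le (q : Polynomial ℝ) {M : ℝ}
    (hM : ∀ x ∈ Icc (-1 : ℝ) 1, |q.eval x| ≤ M) {s t : ℝ} (hs : s ∈ Icc (-1 / 2 : ℝ) (1 / 2))
    (ht : t ∈ Icc (-1 / 2 : ℝ) (1 / 2)) :
    |q.eval s - q.eval t| ≤ 6 * q.natDegree * M * |s - t| := by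
  have hM0 : 0 ≤ M := (abs_nonneg _).trans (hM 0 (by norm_num))
  have hcos := abs_eval_cos_sub_eval_cos_le q hM (Real.arccos s) (Real.arccos t)
  rw [Real.cos_arccos (by linarith [hs.1]) (by linarith [hs.2]),
    Real.cos_arccos (by linarith [ht.1]) (by linarith [ht.2])] at hcos
  calc |q.eval s - q.eval t| ≤ 3 * q.natDegree * M * |Real.arccos s - Real.arccos t| := hcos
    _ ≤ 3 * q.natDegree * M * (2 * |s - t|) := by gcongr; exact abs_arccos_sub_arccos_le hs ht
    _ = 6 * q.natDegree * M * |s - t| := by ring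

lemma eval_aeval_eq_eval {σ R : Type*} [CommSemiring R] (Q : MvPolynomial σ R)
    (γ : σ → Polynomial R) (t : R) :
    (MvPolynomial.aeval γ Q).eval t = MvPolynomial.eval (fun i ↦ (γ i).eval t) Q := by
  simpa [MvPolynomial.aeval_eq_eval] using MvPolynomial.comp_aeval_apply (f := γ)
    (Polynomial.aeval t) Q

lemma abs_eval_curve_sub_le {σ : Type*} (Q : MvPolynomial σ ℝ) {n d : ℕ} (hQ : Q.totalDegree ≤ n)
    (γ : σ → Polynomial ℝ) (hγ : ∀ i, (γ i).natDegree ≤ d) {M : ℝ}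
    (hM : ∀ t ∈ Icc (-1 : ℝ) 1, |MvPolynomial.eval (fun i ↦ (γ i).eval t) Q| ≤ M) {s t : ℝ}
    (hs : s ∈ Icc (-1 / 2 : ℝ) (1 / 2)) (ht : t ∈ Icc (-1 / 2 : ℝ) (1 / 2)) :
    |MvPolynomial.eval (fun i ↦ (γ i).eval s) Q - MvPolynomial.eval (fun i ↦ (γ i).eval t) Q| ≤
      6 * (n * d) * M * |s - t| := by
  have hM0 : 0 ≤ M := (abs_nonneg _).trans (hM 0 (by norm_num))
  have hdeg : ((MvPolynomial.aeval γ Q).natDegree : ℝ) ≤ n * d := by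
    exact_mod_cast MvPolynomial.aeval_natDegree_le Q hQ γ hγ
  simp only [← eval_aeval_eq_eval] at hM ⊢
  refine (abs_eval_sub_eval_le _ hM hs ht).trans ?_
  gcongr

lemma abs_eval_plane_curve_sub_le (Q : MvPolynomial (Fin 2) ℝ) {n d : ℕ} (hQ : Q.totalDegree ≤ n)
    {u v : Polynomial ℝ} (hu : u.natDegree ≤ d) (hv : v.natDegree ≤ d) {M : ℝ}
    (hM : ∀ t ∈ Icc (-1 : ℝ) 1, |MvPolynomial.eval ![u.eval t, v.eval t] Q| ≤ M) {s t : ℝ}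
    (hs : s ∈ Icc (-1 / 2 : ℝ) (1 / 2)) (ht : t ∈ Icc (-1 / 2 : ℝ) (1 / 2)) :
    |MvPolynomial.eval ![u.eval s, v.eval s] Q - MvPolynomial.eval ![u.eval t, v.eval t] Q| ≤
      6 * (n * d) * M * |s - t| := by
  have eval_pair (t : ℝ) : (fun i ↦ (![u, v] i).eval t) = ![u.eval t, v.eval t] := by
    ext i
    fin_cases i <;> rfl
  simp only [← eval_pair] at hM ⊢
  exact abs_eval_curve_sub_le Q hQ ![u, v] (Fin.forall_fin_two.2 ⟨hu, hv⟩) hM hs ht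

lemma abs_eval_vertical_sub_le (Q : MvPolynomial (Fin 2) ℝ) {n : ℕ} (hQ : Q.totalDegree ≤ n)
    {x c d M : ℝ} (hcd : c < d) (hM : ∀ y ∈ Icc c d, |MvPolynomial.eval ![x, y] Q| ≤ M) {y z : ℝ}
    (hy : y ∈ Icc c (c + (d - c) / 4)) (hz : z ∈ Icc c (c + (d - c) / 4)) :
    |MvPolynomial.eval ![x, y] Q - MvPolynomial.eval ![x, z] Q| ≤
      12 * n * M * (|√(y - c) - √(z - c)| / √(d - c)) := by
  have hdc : 0 < d - c := sub_pos.2 hcd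
  set u : Polynomial ℝ := .C x
  set v : Polynomial ℝ := .C c + .C (d - c) * .X ^ 2
  have hv : v.natDegree ≤ 2 := by simp only [v]; compute_degree
  have eval_u (t : ℝ) : u.eval t = x := Polynomial.eval_C
  have eval_v (t : ℝ) : v.eval t = c + (d - c) * t ^ 2 := by simp [v]
  have eval_v_sqrt {y : ℝ} (hy : c ≤ y) : v.eval (√(y - c) / √(d - c)) = y := by
    rw [eval_v, div_pow, Real.sq_sqrt (sub_nonneg.2 hy), Real.sq_sqrt hdc.le]
    field_simp
    ring
  have mem_half {y : ℝ} (hy : y ≤ c + (d - c) / 4) :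
      √(y - c) / √(d - c) ∈ Icc (-1 / 2 : ℝ) (1 / 2) := by
    have : √(y - c) ≤ 1 / 2 * √(d - c) := by
      rw [Real.sqrt_le_left (by positivity), mul_pow, Real.sq_sqrt hdc.le]
      linarith
    have hnonneg : 0 ≤ √(y - c) / √(d - c) := by positivity
    exact ⟨by linarith, (div_le_iff₀ (Real.sqrt_pos.2 hdc)).2 this⟩
  have hcurve := abs_eval_plane_curve_sub_le Q hQ (u := u) (v := v) (d := 2) (M := M)
    ((Polynomial.natDegree_C x).trans_le zero_le_two) hv (fun t ht ↦ ?_)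
    (mem_half hy.2) (mem_half hz.2)
  · rw [eval_v_sqrt hy.1, eval_v_sqrt hz.1, eval_u, eval_u, ← sub_div, abs_div,
      abs_of_pos (Real.sqrt_pos.2 hdc)] at hcurve
    refine hcurve.trans_eq ?_
    push_cast
    ring
  · have ht2 : t ^ 2 ≤ 1 := (sq_le_one_iff_abs_le_one t).2 (abs_le.2 ht)
    rw [eval_u, eval_v]
    exact hM _ ⟨by nlinarith [sq_nonneg t], by nlinarith⟩

lemma abs_sub_eq_abs_sqrt_sub_sqrt_mul {x y : ℝ} (hx : 0 ≤ x) (hy : 0 ≤ y) :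
    |x - y| = |√x - √y| * (√x + √y) := by
  rw [← abs_of_nonneg (add_nonneg (Real.sqrt_nonneg x) (Real.sqrt_nonneg y)), ← abs_mul,
    mul_comm, ← sq_sub_sq, Real.sq_sqrt hx, Real.sq_sqrt hy]

section
variable {f : ℝ → ℝ}

/-- `s` is the left or the right derivative of `f` at `x₀`, i.e. the slope of one of the lines over
which the supremum in `rhoTilde` is taken. -/
def IsOneSidedSlope (f : ℝ → ℝ) (x₀ s : ℝ) : Prop :=
  s = derivWithin f (Ici x₀) x₀ ∨ s = derivWithin f (Iic x₀) x₀

lemma IsOneSidedSlope.add_mul_sub_le {S : Set ℝ} {x₀ s : ℝ} (hs : IsOneSidedSlope f x₀ s)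
    (hf : ConvexOn ℝ S f) (hx₀ : x₀ ∈ interior S) {x : ℝ} (hx : x ∈ S) :
    f x₀ + s * (x - x₀) ≤ f x := by
  have hlr := hf.leftDeriv_le_rightDeriv_of_mem_interior hx₀
  have hIic : derivWithin f (Iic x₀) x₀ = derivWithin f (Iio x₀) x₀ :=
    (hf.hasDerivWithinAt_leftDeriv_of_mem_interior hx₀).Iic_of_Iio.derivWithin
      (uniqueDiffWithinAt_Iic x₀)
  rw [IsOneSidedSlope, ← derivWithin_Ioi_eq_Ici, hIic] at hs
  rcases lt_trichotomy x x₀ with hlt | rfl | hgt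
  · have hslope := hf.slope_le_leftDeriv_of_mem_interior hx hx₀ hlt
    rw [slope_def_field, div_le_iff₀ (by linarith)] at hslope
    have : derivWithin f (Iio x₀) x₀ ≤ s := by rcases hs with rfl | rfl <;> linarith
    nlinarith
  · simp
  · have hslope := hf.rightDeriv_le_slope_of_mem_interior hx₀ hx hgt
    rw [slope_def_field, le_div_iff₀ (by linarith)] at hslope
    have : s ≤ derivWithin f (Ioi x₀) x₀ := by rcases hs with rfl | rfl <;> linarith
    nlinarith

lemma exists_isOneSidedSlope_mul_nonneg {x₀ : ℝ} (hmin : IsLocalMin f x₀) (c : ℝ) :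
    ∃ s, IsOneSidedSlope f x₀ s ∧ 0 ≤ s * c := by
  rcases le_total 0 c with hc | hc
  · refine ⟨_, Or.inl rfl, mul_nonneg ?_ hc⟩
    refine (hmin.on (Ici x₀)).fderivWithin_nonneg (y := 1)
      (mem_posTangentConeAt_of_segment_subset ?_)
    rw [segment_eq_Icc (by linarith)]
    exact Icc_subset_Ici_self
  · refine ⟨_, Or.inr rfl, mul_nonneg_of_nonpos_of_nonpos ?_ hc⟩
    have := (hmin.on (Iic x₀)).fderivWithin_nonneg (y := -1)
      (mem_posTangentConeAt_of_segment_subset (by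
        rw [segment_symm, segment_eq_Icc (by linarith)]
        exact Icc_subset_Iic_self))
    rwa [map_neg, le_neg, neg_zero] at this

/-- The height of `p` above the line of slope `s` through `(x₀, f x₀)`: the expression `y - L(x)`
in the paper's notation. -/
def supportHeight (f : ℝ → ℝ) (x₀ s : ℝ) (p : ℝ × ℝ) : ℝ :=
  p.2 - (f x₀ + s * (p.1 - x₀))

/-- The region `Ω` of the paper: the part of the epigraph of `f` over `[-1, 1]` of height at most
`1/3`. -/
def truncatedEpigraph (f : ℝ → ℝ) : Set (ℝ × ℝ) :=
  {p | p.1 ∈ Icc (-1 : ℝ) 1 ∧ f p.1 ≤ p.2 ∧ p.2 ≤ 1 / 3}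

lemma Icc_subset_interior_Icc : Icc (-1 : ℝ) 1 ⊆ interior (Icc (-2) 2) := by
  rw [interior_Icc]
  exact Icc_subset_Ioo (by norm_num) (by norm_num)

lemma IsOneSidedSlope.abs_le {x₀ s : ℝ} (hs : IsOneSidedSlope f x₀ s)
    (hf : ConvexOn ℝ (Icc (-2) 2) f) (hx₀ : x₀ ∈ Icc (-1 : ℝ) 1) (hfx₀ : 0 ≤ f x₀) :
    |s| ≤ |f 2| + |f (-2)| := by
  have hright := hs.add_mul_sub_le hf (Icc_subset_interior_Icc hx₀) (x := 2) (by norm_num)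
  have hleft := hs.add_mul_sub_le hf (Icc_subset_interior_Icc hx₀) (x := -2) (by norm_num)
  rcases le_total 0 s with hs0 | hs0
  · calc |s| = s * 1 := by rw [abs_of_nonneg hs0, mul_one]
      _ ≤ s * (2 - x₀) := by gcongr; linarith [hx₀.2]
      _ ≤ |f 2| + |f (-2)| := by linarith [le_abs_self (f 2), abs_nonneg (f (-2))]
  · calc |s| = s * -1 := by rw [abs_of_nonpos hs0, mul_neg_one]
      _ ≤ s * (-2 - x₀) := mul_le_mul_of_nonpos_left (by linarith [hx₀.1]) hs0
      _ ≤ |f 2| + |f (-2)| := by linarith [le_abs_self (f (-2)), abs_nonneg (f 2)]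

lemma supportHeight_le {x₀ s : ℝ} (hs : IsOneSidedSlope f x₀ s)
    (hf : ConvexOn ℝ (Icc (-2) 2) f) (hx₀ : x₀ ∈ Icc (-1 : ℝ) 1) (hfx₀ : 0 ≤ f x₀) (p : ℝ × ℝ) :
    supportHeight f x₀ s p ≤ p.2 + (|f 2| + |f (-2)|) * (|p.1| + 1) := by
  have hdist : |p.1 - x₀| ≤ |p.1| + 1 := (abs_sub _ _).trans (by gcongr; exact abs_le.2 hx₀)
  have hmul : |s * (p.1 - x₀)| ≤ (|f 2| + |f (-2)|) * (|p.1| + 1) := by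
    rw [abs_mul]
    gcongr
    exact hs.abs_le hf hx₀ hfx₀
  rw [supportHeight]
  linarith [neg_abs_le (s * (p.1 - x₀))]

lemma bddAbove_abs_sqrt_supportHeight_sub (hf : ConvexOn ℝ (Icc (-2) 2) f)
    (hf_nonneg : ∀ x ∈ Icc (-1 : ℝ) 1, 0 ≤ f x) (p q : ℝ × ℝ) :
    BddAbove {r | ∃ x₀ ∈ Icc (-1 : ℝ) 1, ∃ s, IsOneSidedSlope f x₀ s ∧
      r = |√(supportHeight f x₀ s p) - √(supportHeight f x₀ s q)|} := by
  refine ⟨√(p.2 + (|f 2| + |f (-2)|) * (|p.1| + 1)) + √(q.2 + (|f 2| + |f (-2)|) * (|q.1| + 1)), ?_⟩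
  rintro r ⟨x₀, hx₀, s, hs, rfl⟩
  refine (abs_sub _ _).trans ?_
  rw [abs_of_nonneg (Real.sqrt_nonneg _), abs_of_nonneg (Real.sqrt_nonneg _)]
  gcongr <;> exact supportHeight_le hs hf hx₀ (hf_nonneg x₀ hx₀) _

lemma abs_fst_sub_fst_le_rhoTilde (f : ℝ → ℝ) (p q : ℝ × ℝ) : |p.1 - q.1| ≤ rhoTilde f p q := by
  have hdist : |p.1 - q.1| ≤ √((p.1 - q.1) ^ 2 + (p.2 - q.2) ^ 2) :=
    Real.abs_le_sqrt (le_add_of_nonneg_right (sq_nonneg _))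
  refine le_add_of_le_of_nonneg hdist (Real.sSup_nonneg ?_)
  rintro r ⟨x₀, -, s, -, rfl⟩
  exact abs_nonneg _

lemma abs_sqrt_supportHeight_sub_le_rhoTilde (hf : ConvexOn ℝ (Icc (-2) 2) f)
    (hf_nonneg : ∀ x ∈ Icc (-1 : ℝ) 1, 0 ≤ f x) {x₀ s : ℝ} (hx₀ : x₀ ∈ Icc (-1 : ℝ) 1)
    (hs : IsOneSidedSlope f x₀ s) (p q : ℝ × ℝ) :
    |√(supportHeight f x₀ s p) - √(supportHeight f x₀ s q)| ≤ rhoTilde f p q :=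
  le_add_of_nonneg_of_le (Real.sqrt_nonneg _) <|
    le_csSup (bddAbove_abs_sqrt_supportHeight_sub hf hf_nonneg p q) ⟨x₀, hx₀, s, hs, rfl⟩

lemma supportHeight_nonneg {x₀ s : ℝ} (hs : IsOneSidedSlope f x₀ s)
    (hf : ConvexOn ℝ (Icc (-2) 2) f) (hx₀ : x₀ ∈ Icc (-1 : ℝ) 1) {p : ℝ × ℝ}
    (hp : p.1 ∈ Icc (-2 : ℝ) 2) (hfp : f p.1 ≤ p.2) : 0 ≤ supportHeight f x₀ s p :=
  sub_nonneg.2 <| (hs.add_mul_sub_le hf (Icc_subset_interior_Icc hx₀) hp).trans hfp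

lemma bddAbove_abs_eval_truncatedEpigraph (hf_nonneg : ∀ x ∈ Icc (-1 : ℝ) 1, 0 ≤ f x)
    (Q : MvPolynomial (Fin 2) ℝ) :
    BddAbove ((fun p : ℝ × ℝ ↦ |MvPolynomial.eval ![p.1, p.2] Q|) '' truncatedEpigraph f) := by
  have hcont : Continuous fun p : ℝ × ℝ ↦ |MvPolynomial.eval ![p.1, p.2] Q| := by
    have hpair : Continuous fun p : ℝ × ℝ ↦ (![p.1, p.2] : Fin 2 → ℝ) :=
      continuous_pi (Fin.forall_fin_two.2 ⟨continuous_fst, continuous_snd⟩)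
    exact ((MvPolynomial.continuous_eval Q).comp hpair).abs
  have hbox : truncatedEpigraph f ⊆ Icc (-1) 1 ×ˢ Icc 0 (1 / 3) :=
    fun p hp ↦ ⟨hp.1, (hf_nonneg _ hp.1).trans hp.2.1, hp.2.2⟩
  exact ((isCompact_Icc.prod isCompact_Icc).bddAbove_image hcont.continuousOn).mono
    (image_mono hbox)

variable (hf : ConvexOn ℝ (Icc (-2) 2) f) (f_zero : f 0 = 0)
  (hf_nonneg : ∀ x ∈ Icc (-1 : ℝ) 1, 0 ≤ f x)
include hf f_zero

lemma le_supportHeight_zero_fst {x₀ s : ℝ} (hx₀ : x₀ ∈ Icc (-1 : ℝ) 1)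
    (hs : IsOneSidedSlope f x₀ s) (δ : ℝ) : δ ≤ supportHeight f x₀ s (0, δ) := by
  have := hs.add_mul_sub_le hf (Icc_subset_interior_Icc hx₀) (x := 0) (by norm_num)
  rw [supportHeight]
  linarith

include hf_nonneg

-- The two one-sided tangents at the origin lie on either side of the horizontal axis, so `b` is
-- squeezed between the two corresponding support heights of `(a, b)`.
lemma abs_sqrt_sub_sqrt_le_rhoTilde (δ a b : ℝ) : |√δ - √b| ≤ rhoTilde f (0, δ) (a, b) := by
  have hmin : IsLocalMin f 0 := by
    filter_upwards [Icc_mem_nhds (show (-1 : ℝ) < 0 by norm_num) one_pos] with x hx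
    exact f_zero.trans_le (hf_nonneg x hx)
  have hline {s : ℝ} (hs : IsOneSidedSlope f 0 s) :
      |√δ - √(b - s * a)| ≤ rhoTilde f (0, δ) (a, b) := by
    simpa [supportHeight, f_zero] using abs_sqrt_supportHeight_sub_le_rhoTilde hf hf_nonneg
      (by norm_num) hs (0, δ) (a, b)
  obtain ⟨s, hs, hsa⟩ := exists_isOneSidedSlope_mul_nonneg hmin a
  obtain ⟨s', hs', hsa'⟩ := exists_isOneSidedSlope_mul_nonneg hmin (-a)
  have hlow : √(b - s * a) ≤ √b := Real.sqrt_le_sqrt (by linarith)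
  have hhigh : √b ≤ √(b - s' * a) := Real.sqrt_le_sqrt (by linarith)
  rw [abs_le]
  constructor <;> linarith [(abs_le.1 (hline hs)).2, (abs_le.1 (hline hs')).1]

variable {δ a b : ℝ}

variable (hab : (a, b) ∈ truncatedEpigraph f) (hρ : rhoTilde f (0, δ) (a, b) ≤ √δ / 10)
include hab hρ

lemma abs_sub_le_rhoTilde_mul_sqrt (hδ : 0 ≤ δ) :
    |b - δ| ≤ 21 / 10 * (rhoTilde f (0, δ) (a, b) * √δ) := by
  have hclose := abs_sqrt_sub_sqrt_le_rhoTilde hf f_zero hf_nonneg δ a b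
  have hb : 0 ≤ b := (hf_nonneg a hab.1).trans hab.2.1
  rw [abs_sub_comm, abs_sub_eq_abs_sqrt_sub_sqrt_mul hδ hb]
  calc |√δ - √b| * (√δ + √b) ≤ rhoTilde f (0, δ) (a, b) * (21 / 10 * √δ) := by
        gcongr
        · exact (abs_nonneg _).trans hclose
        · linarith [(abs_le.1 hclose).1]
    _ = _ := by ring

lemma abs_slope_mul_le (hδ : 0 ≤ δ) {x₀ s : ℝ} (hx₀ : x₀ ∈ Icc (-1 : ℝ) 1)
    (hs : IsOneSidedSlope f x₀ s) :
    |s * a| ≤ 5 * rhoTilde f (0, δ) (a, b) * √(supportHeight f x₀ s (0, δ)) := by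
  set ρ := rhoTilde f (0, δ) (a, b)
  set u := supportHeight f x₀ s (0, δ) with hu
  set w := supportHeight f x₀ s (a, b) with hw
  have hδu : δ ≤ u := le_supportHeight_zero_fst hf f_zero hx₀ hs δ
  have ha2 : a ∈ Icc (-2 : ℝ) 2 := interior_subset (Icc_subset_interior_Icc hab.1)
  have hw0 : 0 ≤ w := supportHeight_nonneg hs hf hx₀ ha2 hab.2.1
  have hclose : |√u - √w| ≤ ρ := abs_sqrt_supportHeight_sub_le_rhoTilde hf hf_nonneg hx₀ hs _ _
  have hρ0 : 0 ≤ ρ := (abs_nonneg _).trans hclose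
  have hsqrt : √δ ≤ √u := Real.sqrt_le_sqrt hδu
  have huw : |u - w| ≤ ρ * (21 / 10 * √u) := by
    rw [abs_sub_eq_abs_sqrt_sub_sqrt_mul (hδ.trans hδu) hw0]
    gcongr
    linarith [(abs_le.1 hclose).1]
  have hbδ : |b - δ| ≤ ρ * (21 / 10 * √u) := by
    calc |b - δ| ≤ 21 / 10 * (ρ * √δ) := abs_sub_le_rhoTilde_mul_sqrt hf f_zero hf_nonneg hab hρ hδ
      _ ≤ 21 / 10 * (ρ * √u) := by gcongr
      _ = _ := by ring
  calc |s * a| = |(u - w) + (b - δ)| := by rw [hu, hw, supportHeight, supportHeight]; ring_nf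
    _ ≤ |u - w| + |b - δ| := abs_add_le _ _
    _ ≤ 5 * ρ * √u := by linarith [mul_nonneg hρ0 (Real.sqrt_nonneg u)]

lemma apply_le_parabola (hδ : 0 ≤ δ) {t : ℝ} (ht : a * t ∈ Icc (-1 : ℝ) 1) :
    f (a * t) ≤ δ + (5 / 2 * rhoTilde f (0, δ) (a, b) * t) ^ 2 := by
  set ρ := rhoTilde f (0, δ) (a, b)
  set s := derivWithin f (Ici (a * t)) (a * t)
  have hs : IsOneSidedSlope f (a * t) s := .inl rfl
  set u := supportHeight f (a * t) s (0, δ) with hu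
  have hu0 : 0 ≤ u := hδ.trans (le_supportHeight_zero_fst hf f_zero ht hs δ)
  calc f (a * t) = δ + s * a * t - u := by rw [hu, supportHeight]; ring
    _ ≤ δ + |s * a| * |t| - u := by rw [← abs_mul]; gcongr; exact le_abs_self _
    _ ≤ δ + 5 * ρ * √u * |t| - u := by
        gcongr
        exact abs_slope_mul_le hf f_zero hf_nonneg hab hρ hδ ht hs
    _ = δ + (5 / 2 * ρ * t) ^ 2 - (√u - 5 / 2 * ρ * |t|) ^ 2 := by
        linear_combination Real.sq_sqrt hu0 + (5 / 2 * ρ) ^ 2 * sq_abs t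
    _ ≤ δ + (5 / 2 * ρ * t) ^ 2 := sub_le_self _ (sq_nonneg _)

lemma parabola_mem_truncatedEpigraph (hδ : 0 ≤ δ) (hδ' : δ ≤ 1 / 100) {t : ℝ}
    (ht : t ∈ Icc (-1 : ℝ) 1) :
    (a / (6 * rhoTilde f (0, δ) (a, b)) * t, δ + 25 / 144 * t ^ 2) ∈ truncatedEpigraph f := by
  set ρ := rhoTilde f (0, δ) (a, b)
  have haρ : |a| ≤ ρ := by simpa using abs_fst_sub_fst_le_rhoTilde f (0, δ) (a, b)
  have hρ0 : 0 ≤ ρ := (abs_nonneg a).trans haρ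
  have ht_abs : |t| ≤ 1 := abs_le.2 ht
  have ht_sq : t ^ 2 ≤ 1 := (sq_le_one_iff_abs_le_one t).2 ht_abs
  have hfst : a / (6 * ρ) * t ∈ Icc (-1 : ℝ) 1 := by
    have hslope : |a / (6 * ρ)| ≤ 1 := by
      rw [abs_div, abs_of_nonneg (by positivity : 0 ≤ 6 * ρ)]
      exact div_le_one_of_le₀ (by linarith) (by positivity)
    rw [mem_Icc, ← abs_le, abs_mul]
    exact mul_le_one₀ hslope (abs_nonneg t) ht_abs
  have hρρ : (ρ / ρ) ^ 2 ≤ 1 := pow_le_one₀ (by positivity) (div_self_le_one ρ)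
  have hscale : 5 / 2 * ρ * (t / (6 * ρ)) = 5 / 12 * (ρ / ρ) * t := by ring
  refine ⟨hfst, ?_, by linarith⟩
  rw [div_mul_eq_mul_div, mul_div_assoc] at hfst ⊢
  calc f (a * (t / (6 * ρ))) ≤ δ + (5 / 12 * (ρ / ρ) * t) ^ 2 :=
        hscale ▸ apply_le_parabola hf f_zero hf_nonneg hab hρ hδ hfst
    _ = δ + 25 / 144 * t ^ 2 * (ρ / ρ) ^ 2 := by ring
    _ ≤ δ + 25 / 144 * t ^ 2 :=
        add_le_add le_rfl (mul_le_of_le_one_right (by positivity) hρρ)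

lemma nine_tenths_mul_sqrt_le_sqrt_sub : 9 / 10 * √δ ≤ √(b - f a) := by
  have hclose := abs_sqrt_supportHeight_sub_le_rhoTilde hf hf_nonneg hab.1 (.inl rfl) (0, δ) (a, b)
  have hheight_le : √δ ≤ √(supportHeight f a (derivWithin f (Ici a) a) (0, δ)) :=
    Real.sqrt_le_sqrt (le_supportHeight_zero_fst hf f_zero hab.1 (.inl rfl) δ)
  have height_self : supportHeight f a (derivWithin f (Ici a) a) (a, b) = b - f a := by
    simp [supportHeight]
  rw [height_self] at hclose
  linarith [(abs_le.1 hclose).2]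

lemma abs_sqrt_parabola_sub_sqrt_le (hδ : 0 < δ) :
    |√(δ + (5 / 2 * rhoTilde f (0, δ) (a, b)) ^ 2 - f a) - √(b - f a)| ≤
      10 / 3 * rhoTilde f (0, δ) (a, b) := by
  have hfa := apply_le_parabola hf f_zero hf_nonneg hab hρ hδ.le (t := 1) (by simpa using hab.1)
  have hbδ := abs_sub_le_rhoTilde_mul_sqrt hf f_zero hf_nonneg hab hρ hδ.le
  have hheight_le := nine_tenths_mul_sqrt_le_sqrt_sub hf f_zero hf_nonneg hab hρ
  have hρ0 := (abs_nonneg _).trans (abs_fst_sub_fst_le_rhoTilde f (0, δ) (a, b))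
  rw [mul_one, mul_one] at hfa
  set ρ := rhoTilde f (0, δ) (a, b)
  set y := δ + (5 / 2 * ρ) ^ 2 with hy
  have hρ_sq : ρ * ρ ≤ ρ * (√δ / 10) := by gcongr
  have hρδ : 0 ≤ ρ * √δ := by positivity
  have hyb : |y - b| ≤ 3 * ρ * √δ := by
    rw [abs_le] at hbδ ⊢
    constructor <;> nlinarith [mul_self_nonneg ρ]
  refine le_of_mul_le_mul_right ?_ (show 0 < 9 / 10 * √δ by positivity)
  calc |√(y - f a) - √(b - f a)| * (9 / 10 * √δ)
      ≤ |√(y - f a) - √(b - f a)| * (√(y - f a) + √(b - f a)) := by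
        gcongr
        exact hheight_le.trans (le_add_of_nonneg_left (Real.sqrt_nonneg _))
    _ = |y - b| := by
        rw [← abs_sub_eq_abs_sqrt_sub_sqrt_mul (sub_nonneg.2 hfa) (sub_nonneg.2 hab.2.1),
          sub_sub_sub_cancel_right]
    _ ≤ 3 * ρ * √δ := hyb
    _ = 10 / 3 * ρ * (9 / 10 * √δ) := by ring

variable (hδ : 0 < δ) (hδ' : δ ≤ 1 / 100) {Q : MvPolynomial (Fin 2) ℝ} {n : ℕ}
  (hQ : Q.totalDegree ≤ n) {M : ℝ}
  (hM : ∀ p ∈ truncatedEpigraph f, |MvPolynomial.eval ![p.1, p.2] Q| ≤ M)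
include hδ hδ' hQ hM

lemma abs_eval_sub_eval_parabola_le :
    |MvPolynomial.eval ![0, δ] Q -
        MvPolynomial.eval ![a, δ + (5 / 2 * rhoTilde f (0, δ) (a, b)) ^ 2] Q| ≤
      72 * n * rhoTilde f (0, δ) (a, b) * M := by
  have hcurve_mem {t : ℝ} :=
    parabola_mem_truncatedEpigraph hf f_zero hf_nonneg hab hρ hδ.le hδ' (t := t)
  have haρ : |a| ≤ rhoTilde f (0, δ) (a, b) := by
    simpa using abs_fst_sub_fst_le_rhoTilde f (0, δ) (a, b)
  set ρ := rhoTilde f (0, δ) (a, b)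
  have hρ0 : 0 ≤ ρ := (abs_nonneg a).trans haρ
  have hρ_small : ρ ≤ 1 / 100 := by
    have : √δ ≤ 1 / 10 := (Real.sqrt_le_left (by norm_num)).2 (by linarith)
    linarith
  -- In the degenerate case `ρ = 0` we have `a = 0`, so the junk value `a / 0 = 0` is harmless.
  have ha_cancel : a / (6 * ρ) * (6 * ρ) = a :=
    div_mul_cancel_of_imp fun h ↦ abs_nonpos_iff.1 (by linarith)
  set u : Polynomial ℝ := .C (a / (6 * ρ)) * .X
  set v : Polynomial ℝ := .C δ + .C (25 / 144) * .X ^ 2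
  have hu : u.natDegree ≤ 2 := by simp only [u]; compute_degree!
  have hv : v.natDegree ≤ 2 := by simp only [v]; compute_degree
  have eval_u (t : ℝ) : u.eval t = a / (6 * ρ) * t := by simp [u]
  have eval_v (t : ℝ) : v.eval t = δ + 25 / 144 * t ^ 2 := by simp [v]
  have u_start : u.eval 0 = 0 := by rw [eval_u, mul_zero]
  have v_start : v.eval 0 = δ := by rw [eval_v]; ring
  have u_end : u.eval (6 * ρ) = a := by rw [eval_u, ha_cancel]
  have v_end : v.eval (6 * ρ) = δ + (5 / 2 * ρ) ^ 2 := by rw [eval_v]; ring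
  have hcurve := abs_eval_plane_curve_sub_le Q hQ hu hv (M := M) (s := 0) (t := 6 * ρ)
    (fun t ht ↦ by rw [eval_u, eval_v]; exact hM (_, _) (hcurve_mem ht))
    (by norm_num) ⟨by linarith, by linarith⟩
  rw [u_start, v_start, u_end, v_end, zero_sub, abs_neg,
    abs_of_nonneg (by positivity : 0 ≤ 6 * ρ)] at hcurve
  refine hcurve.trans_eq ?_
  push_cast
  ring

lemma abs_eval_parabola_sub_eval_le :
    |MvPolynomial.eval ![a, δ + (5 / 2 * rhoTilde f (0, δ) (a, b)) ^ 2] Q -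
        MvPolynomial.eval ![a, b] Q| ≤ 80 * n * rhoTilde f (0, δ) (a, b) * M := by
  have hsqrt := abs_sqrt_parabola_sub_sqrt_le hf f_zero hf_nonneg hab hρ hδ
  have hfy := apply_le_parabola hf f_zero hf_nonneg hab hρ hδ.le (t := 1) (by simpa using hab.1)
  have hbδ := (abs_le.1 (abs_sub_le_rhoTilde_mul_sqrt hf f_zero hf_nonneg hab hρ hδ.le)).2
  have hfa := hf_nonneg a hab.1
  have hM0 : 0 ≤ M := (abs_nonneg _).trans (hM _ hab)
  have hρ0 := (abs_nonneg _).trans (abs_fst_sub_fst_le_rhoTilde f (0, δ) (a, b))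
  rw [mul_one, mul_one] at hfy
  set ρ := rhoTilde f (0, δ) (a, b)
  have hδ_sqrt : √δ ≤ 1 / 10 := (Real.sqrt_le_left (by norm_num)).2 (by linarith)
  have hρ_small : ρ ≤ 1 / 100 := by linarith
  set y := δ + (5 / 2 * ρ) ^ 2 with hy
  have hy_small : y ≤ 1 / 12 := by
    have hρ_sq : ρ ^ 2 ≤ (1 / 100) ^ 2 := by gcongr
    linarith
  have hb_small : b ≤ 1 / 12 := by
    have hρδ : ρ * √δ ≤ 1 / 100 * (1 / 10) := by gcongr
    linarith
  have hheight : 1 / 2 ≤ √(1 / 3 - f a) := Real.le_sqrt_of_sq_le (by linarith)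
  calc |MvPolynomial.eval ![a, y] Q - MvPolynomial.eval ![a, b] Q|
      ≤ 12 * n * M * (|√(y - f a) - √(b - f a)| / √(1 / 3 - f a)) :=
        abs_eval_vertical_sub_le Q hQ (c := f a) (d := 1 / 3) (by linarith)
          (fun z hz ↦ hM (a, z) ⟨hab.1, hz⟩) ⟨hfy, by linarith⟩ ⟨hab.2.1, by linarith⟩
    _ ≤ 12 * n * M * (10 / 3 * ρ / (1 / 2)) := by gcongr
    _ = 80 * n * ρ * M := by ring

lemma abs_eval_sub_eval_le_of_rhoTilde_le :
    |MvPolynomial.eval ![0, δ] Q - MvPolynomial.eval ![a, b] Q| ≤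
      152 * n * rhoTilde f (0, δ) (a, b) * M := by
  refine (abs_sub_le _ _ _).trans ((add_le_add
    (abs_eval_sub_eval_parabola_le hf f_zero hf_nonneg hab hρ hδ hδ' hQ hM)
    (abs_eval_parabola_sub_eval_le hf f_zero hf_nonneg hab hρ hδ hδ' hQ hM)).trans_eq ?_)
  ring

end

lemma abs_sub_le_of_sqrt_div_ten_le {n : ℕ} (hn : 0 < n) {C₁ δ ρ M x y : ℝ} (hC₁ : 0 < C₁)
    (hδ : C₁ ^ 2 / n ^ 2 ≤ δ) (hρ : √δ / 10 ≤ ρ) (hx : |x| ≤ M) (hy : |y| ≤ M) :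
    |x - y| ≤ 20 / C₁ * n * ρ * M := by
  have hM : 0 ≤ M := (abs_nonneg x).trans hx
  rify at hn
  have hsqrt : C₁ / n ≤ √δ := Real.le_sqrt_of_sq_le (by rwa [div_pow])
  have hlarge : 2 ≤ 20 / C₁ * n * ρ :=
    calc (2 : ℝ) = 20 / C₁ * n * (C₁ / n / 10) := by field_simp; norm_num
      _ ≤ 20 / C₁ * n * ρ := by gcongr; linarith
  calc |x - y| ≤ 2 * M := (abs_sub x y).trans (by linarith)
    _ ≤ 20 / C₁ * n * ρ * M := by gcongr

theorem two_dimensional_key_proposition_general {C₁ : ℝ} (hC₁ : 0 < C₁) :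
    ∃ C > (1 : ℝ), ∀ f : ℝ → ℝ,
      ConvexOn ℝ (Icc (-2 : ℝ) 2) f → f 0 = 0 → (∀ x ∈ Icc (-1 : ℝ) 1, 0 ≤ f x) →
      ∀ n : ℕ, 0 < n → ∀ δ : ℝ, C₁ ^ 2 / n ^ 2 ≤ δ → δ ≤ 1 / 100 →
      ∀ Q : MvPolynomial (Fin 2) ℝ, Q.totalDegree ≤ n →
      ∀ a b : ℝ, (a, b) ∈ truncatedEpigraph f →
        |MvPolynomial.eval ![0, δ] Q - MvPolynomial.eval ![a, b] Q| ≤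
          C * n * rhoTilde f (0, δ) (a, b) *
            sSup ((fun p : ℝ × ℝ ↦ |MvPolynomial.eval ![p.1, p.2] Q|) '' truncatedEpigraph f) := by
  refine ⟨152 + 20 / C₁, by linarith [div_pos (by norm_num : (0 : ℝ) < 20) hC₁], ?_⟩
  intro f hf f_zero hf_nonneg n hn δ hδ hδ' Q hQ a b hab
  have hδ_pos : 0 < δ := lt_of_lt_of_le (by positivity) hδ
  have hM (p : ℝ × ℝ) (hp : p ∈ truncatedEpigraph f) := le_csSup
    (bddAbove_abs_eval_truncatedEpigraph hf_nonneg Q) (mem_image_of_mem _ hp)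
  have hρ0 := (abs_nonneg _).trans (abs_fst_sub_fst_le_rhoTilde f (0, δ) (a, b))
  have hM0 := (abs_nonneg _).trans (hM _ hab)
  have hp : (0, δ) ∈ truncatedEpigraph f :=
    ⟨by norm_num, f_zero.trans_le hδ_pos.le, hδ'.trans (by norm_num)⟩
  rcases le_total (rhoTilde f (0, δ) (a, b)) (√δ / 10) with hρ | hρ
  · refine
      (abs_eval_sub_eval_le_of_rhoTilde_le hf f_zero hf_nonneg hab hρ hδ_pos hδ' hQ hM).trans ?_
    gcongr
    exact le_add_of_nonneg_right (by positivity)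
  · refine (abs_sub_le_of_sqrt_div_ten_le hn hC₁ hδ hρ (hM _ hp) (hM _ hab)).trans ?_
    gcongr
    exact le_add_of_nonneg_left (by norm_num)

theorem two_dimensional_key_proposition :
    ∃ C₁ > (0 : ℝ), ∃ C > (1 : ℝ), ∀ f : ℝ → ℝ,
      ConvexOn ℝ (Set.Icc (-2 : ℝ) 2) f →
      ContinuousOn f (Set.Icc (-2 : ℝ) 2) →
      f 0 = 0 →
      derivWithin f (Set.Ici (0 : ℝ)) 0 = 0 →
      (∀ x ∈ Set.Icc (-1 : ℝ) 1, 0 ≤ f x ∧ f x ≤ 1 / 5) →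
      (∀ x ∈ Set.Icc (-1 : ℝ) 1,
        |derivWithin f (Set.Ici x) x| ≤ 1 / 3 ∧ |derivWithin f (Set.Iic x) x| ≤ 1 / 3) →
      ∀ G : Set (ℝ × ℝ),
        G = {p : ℝ × ℝ | p.1 ∈ Set.Icc (-1 : ℝ) 1 ∧ f p.1 ≤ p.2 ∧ p.2 ≤ 1 / 3} →
      ∀ n : ℕ, 0 < n → ∀ δ : ℝ, C₁ ^ 2 / n ^ 2 ≤ δ → δ ≤ 1 / 100 →
      ∀ Q : MvPolynomial (Fin 2) ℝ, Q.totalDegree ≤ n →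
      ∀ a b : ℝ, (a, b) ∈ G →
        |MvPolynomial.eval ![0, δ] Q - MvPolynomial.eval ![a, b] Q| ≤
          C * n * rhoTilde f (0, δ) (a, b) *
            sSup ((fun p : ℝ × ℝ => |MvPolynomial.eval ![p.1, p.2] Q|) '' G) := by
  obtain ⟨C, hC, h⟩ := two_dimensional_key_proposition_general one_pos
  refine ⟨1, one_pos, C, hC, ?_⟩
  rintro f hf - f_zero - hf_bounds - _ rfl
  exact h f hf f_zero fun x hx ↦ (hf_bounds x hx).1
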